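/- Local Lipschitz continuity of Gaussian conditioning: for every R ≥ 1 there exists a constant C_B = C_B(R, κ_y) such that for all nondegenerate Gaussian probability measures π, p ∈ G_R(R^d × R^K) and every datum y† ∈ R^K with |y†| ≤ κ_y, d_g(Bπ, Bp) ≤ C_B d_g(π, p). -/

import Mathlib

open MeasureTheory Matrix
open scoped BigOperators ENNReal

noncomputable section

namespace EnKF

/-- Points of `ℝ^n`, with Lebesgue measure as `volume`. -/
abbrev Vec (n : ℕ) := Fin n → ℝ

/-- Euclidean norm of a finitely indexed real vector. -/
def enorm {ι : Type*} [Fintype ι] (v : ι → ℝ) : ℝ := Real.sqrt (∑ i, v i ^ 2)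

/-- The weight function `g(v) = 1 + |v|²` on `ℝ^n`. -/
def gw {n : ℕ} (v : Vec n) : ℝ := 1 + ∑ i, v i ^ 2

/-- The weight function `g(u, y) = 1 + |u|² + |y|²` on `ℝ^d × ℝ^K`. -/
def gw2 {d K : ℕ} (p : Vec d × Vec K) : ℝ := 1 + (∑ i, p.1 i ^ 2) + (∑ j, p.2 j ^ 2)

/-- Weighted total-variation metric with weight `G`:
`d_G(μ₁, μ₂) = sup { |μ₁[f] − μ₂[f]| : f measurable, |f| ≤ G pointwise }`. -/
def dG {E : Type*} [MeasurableSpace E] (G : E → ℝ) (μ₁ μ₂ : Measure E) : ℝ :=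
  ⨆ f : {f : E → ℝ // Measurable f ∧ ∀ v, |f v| ≤ G v},
    |(∫ v, f.1 v ∂μ₁) - ∫ v, f.1 v ∂μ₂|

/-- Loewner order on symmetric matrices: `loe A B ↔ A ≼ B`. -/
def loe {ι : Type*} [Fintype ι] (A B : Matrix ι ι ℝ) : Prop := (B - A).PosSemidef

/-- Mean vector of a measure on `ℝ^n`. -/
def mean {n : ℕ} (μ : Measure (Vec n)) : Vec n := fun i => ∫ v, v i ∂μ

/-- Covariance matrix of a measure on `ℝ^n`. -/
def cov {n : ℕ} (μ : Measure (Vec n)) : Matrix (Fin n) (Fin n) ℝ :=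
  Matrix.of fun i j => ∫ v, (v i - mean μ i) * (v j - mean μ j) ∂μ

/-- Density of the Gaussian `N(m, S)` on `ℝ^n`. -/
def gaussDensity {n : ℕ} (m : Vec n) (S : Matrix (Fin n) (Fin n) ℝ) (x : Vec n) : ℝ :=
  (Real.sqrt ((2 * Real.pi) ^ n * S.det))⁻¹ *
    Real.exp (-(1 / 2) * ((x - m) ⬝ᵥ (S⁻¹ *ᵥ (x - m))))

/-- The (nondegenerate) Gaussian measure `N(m, S)` on `ℝ^n`. -/
def gauss {n : ℕ} (m : Vec n) (S : Matrix (Fin n) (Fin n) ℝ) : Measure (Vec n) :=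
  volume.withDensity fun x => ENNReal.ofReal (gaussDensity m S x)

/-- Gaussian projection `G` on `ℝ^n`: the Gaussian with the same mean and covariance. -/
def Gproj {n : ℕ} (μ : Measure (Vec n)) : Measure (Vec n) := gauss (mean μ) (cov μ)

variable {d K : ℕ}

/-- Mean of the first (state) marginal of a measure on `ℝ^d × ℝ^K`. -/
def meanU (π : Measure (Vec d × Vec K)) : Vec d := fun i => ∫ p, p.1 i ∂π

/-- Mean of the second (data) marginal of a measure on `ℝ^d × ℝ^K`. -/
def meanY (π : Measure (Vec d × Vec K)) : Vec K := fun j => ∫ p, p.2 j ∂π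

/-- Block `C^{uu}` of the covariance of a measure on `ℝ^d × ℝ^K`. -/
def covUU (π : Measure (Vec d × Vec K)) : Matrix (Fin d) (Fin d) ℝ :=
  Matrix.of fun i j => ∫ p, (p.1 i - meanU π i) * (p.1 j - meanU π j) ∂π

/-- Block `C^{uy}` of the covariance of a measure on `ℝ^d × ℝ^K`. -/
def covUY (π : Measure (Vec d × Vec K)) : Matrix (Fin d) (Fin K) ℝ :=
  Matrix.of fun i j => ∫ p, (p.1 i - meanU π i) * (p.2 j - meanY π j) ∂π

/-- Block `C^{yy}` of the covariance of a measure on `ℝ^d × ℝ^K`. -/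
def covYY (π : Measure (Vec d × Vec K)) : Matrix (Fin K) (Fin K) ℝ :=
  Matrix.of fun i j => ∫ p, (p.2 i - meanY π i) * (p.2 j - meanY π j) ∂π

/-- Full covariance matrix of a measure on `ℝ^d × ℝ^K`, in block form. -/
def covBlock (π : Measure (Vec d × Vec K)) : Matrix (Fin d ⊕ Fin K) (Fin d ⊕ Fin K) ℝ :=
  Matrix.fromBlocks (covUU π) (covUY π) (covUY π)ᵀ (covYY π)

/-- Density of a Gaussian on `ℝ^d × ℝ^K` with mean `(mu, my)` and covariance `S`. -/
def jointGaussDensity (mu : Vec d) (my : Vec K)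
    (S : Matrix (Fin d ⊕ Fin K) (Fin d ⊕ Fin K) ℝ) (p : Vec d × Vec K) : ℝ :=
  (Real.sqrt ((2 * Real.pi) ^ (d + K) * S.det))⁻¹ *
    Real.exp (-(1 / 2) *
      (Sum.elim (p.1 - mu) (p.2 - my) ⬝ᵥ (S⁻¹ *ᵥ Sum.elim (p.1 - mu) (p.2 - my))))

/-- Gaussian measure on `ℝ^d × ℝ^K` with mean `(mu, my)` and covariance `S`. -/
def jointGauss (mu : Vec d) (my : Vec K)
    (S : Matrix (Fin d ⊕ Fin K) (Fin d ⊕ Fin K) ℝ) : Measure (Vec d × Vec K) :=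
  volume.withDensity fun p => ENNReal.ofReal (jointGaussDensity mu my S p)

/-- Density of the Gaussian projection of a measure on `ℝ^d × ℝ^K`. -/
def gProjDensity2 (π : Measure (Vec d × Vec K)) : Vec d × Vec K → ℝ :=
  jointGaussDensity (meanU π) (meanY π) (covBlock π)

/-- Gaussian projection on `ℝ^d × ℝ^K`. -/
def Gproj2 (π : Measure (Vec d × Vec K)) : Measure (Vec d × Vec K) :=
  jointGauss (meanU π) (meanY π) (covBlock π)

/-- Prediction operator `P`: the law of `Ψ(V) + ξ`, `V ∼ μ` independent of `ξ ∼ N(0, Σ)`. -/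
def Pop (Psi : Vec d → Vec d) (Sig : Matrix (Fin d) (Fin d) ℝ)
    (μ : Measure (Vec d)) : Measure (Vec d) :=
  (μ.prod (gauss 0 Sig)).map fun p => Psi p.1 + p.2

/-- Lifting operator `Q`: the law of `(U, H(U) + η)`, `U ∼ μ` independent of `η ∼ N(0, Γ)`. -/
def Qop (H : Vec d → Vec K) (Gam : Matrix (Fin K) (Fin K) ℝ)
    (μ : Measure (Vec d)) : Measure (Vec d × Vec K) :=
  (μ.prod (gauss 0 Gam)).map fun p => (p.1, H p.1 + p.2)

/-- Lebesgue density of `Pμ`. -/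
def predDensity (Psi : Vec d → Vec d) (Sig : Matrix (Fin d) (Fin d) ℝ)
    (μ : Measure (Vec d)) (u : Vec d) : ℝ :=
  (Real.sqrt ((2 * Real.pi) ^ d * Sig.det))⁻¹ *
    ∫ v, Real.exp (-(1 / 2) * ((u - Psi v) ⬝ᵥ (Sig⁻¹ *ᵥ (u - Psi v)))) ∂μ

/-- Lebesgue density of `QPμ` on `ℝ^d × ℝ^K`. -/
def qpDensity (Psi : Vec d → Vec d) (Sig : Matrix (Fin d) (Fin d) ℝ)
    (H : Vec d → Vec K) (Gam : Matrix (Fin K) (Fin K) ℝ)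
    (μ : Measure (Vec d)) (p : Vec d × Vec K) : ℝ :=
  predDensity Psi Sig μ p.1 * gaussDensity (H p.1) Gam p.2

/-- Conditioning operator `B` applied to a (joint) density `f` and a datum `y†`:
the measure on `ℝ^d` with density `u ↦ f(u, y†) / ∫ f(U, y†) dU`. -/
def condM (f : Vec d × Vec K → ℝ) (ydag : Vec K) : Measure (Vec d) :=
  volume.withDensity fun u => ENNReal.ofReal (f (u, ydag) / ∫ U, f (U, ydag))

/-- Kalman transport operator `T`: the pushforward of `π` under
`(u, y) ↦ u + C^{uy}(π) C^{yy}(π)⁻¹ (y† − y)`. -/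
def Top (ydag : Vec K) (π : Measure (Vec d × Vec K)) : Measure (Vec d) :=
  π.map fun p => p.1 + covUY π *ᵥ ((covYY π)⁻¹ *ᵥ (ydag - p.2))

/-- Operator (spectral) norm of a real matrix. -/
def opNorm {ι : Type*} [Fintype ι] {κ : Type*} [Fintype κ] (A : Matrix ι κ ℝ) : ℝ :=
  ⨆ x : {x : κ → ℝ // ∑ i, x i ^ 2 ≤ 1}, enorm (A *ᵥ x.1)

/-- Frobenius norm of a real matrix. -/
def frobNorm {ι κ : Type*} [Fintype ι] [Fintype κ] (A : Matrix ι κ ℝ) : ℝ :=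
  Real.sqrt (∑ i, ∑ j, A i j ^ 2)

/-- Weighted norm `|x|_S = |S^{-1/2} x|`, i.e. `√(xᵀ S⁻¹ x)`. -/
def wnorm {n : ℕ} (S : Matrix (Fin n) (Fin n) ℝ) (x : Vec n) : ℝ :=
  Real.sqrt (x ⬝ᵥ (S⁻¹ *ᵥ x))

/-- The set `𝒫_R(ℝ^n)` of probability measures with `|M(μ)| ≤ R` and
`R⁻² I ≼ C(μ) ≼ R² I`. -/
def PR (n : ℕ) (R : ℝ) : Set (Measure (Vec n)) :=
  {μ | IsProbabilityMeasure μ ∧ enorm (mean μ) ≤ R ∧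
    loe ((R ^ 2)⁻¹ • 1) (cov μ) ∧ loe (cov μ) (R ^ 2 • 1)}

/-- The set `𝒫_R(ℝ^d × ℝ^K)`. -/
def PR2 (d K : ℕ) (R : ℝ) : Set (Measure (Vec d × Vec K)) :=
  {π | IsProbabilityMeasure π ∧ enorm (Sum.elim (meanU π) (meanY π)) ≤ R ∧
    loe ((R ^ 2)⁻¹ • 1) (covBlock π) ∧ loe (covBlock π) (R ^ 2 • 1)}

/-- Smallest eigenvalue of a symmetric matrix (Rayleigh quotient form). -/
def lambdaMin {ι : Type*} [Fintype ι] (A : Matrix ι ι ℝ) : ℝ :=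
  ⨅ x : {x : ι → ℝ // ∑ i, x i ^ 2 = 1}, x.1 ⬝ᵥ (A *ᵥ x.1)

/-- Kullback–Leibler divergence `KL(μ₁ ‖ μ₂) = ∫ (dμ₁/dμ₂) log (dμ₁/dμ₂) dμ₂`. -/
def kl {E : Type*} [MeasurableSpace E] (μ₁ μ₂ : Measure E) : ℝ :=
  ∫ v, ((μ₁.rnDeriv μ₂ v).toReal * Real.log (μ₁.rnDeriv μ₂ v).toReal) ∂μ₂

/-!
Since `|x i|` and `|x i * x j|` are bounded by the weight `g`, the metric `d_g` between two
Gaussians controls the distance between their means and between their covariances, and by the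
resolvent identity also the distance between their precision matrices. Conditioning does not see
normalising constants, so it can be applied to the kernels `exp (-½ (x - m)ᵀ P (x - m))` instead of
the densities. For parameters in the class, the slices of these kernels at `y†` have a common
Gaussian envelope, their total mass is bounded below uniformly in `|y†| ≤ κ_y`, and in the `L¹` norm
with weight `g` they depend Lipschitz continuously on `(m, P)`; normalising preserves this.
-/

section LoewnerOrder

variable {ι : Type*} [Fintype ι] [DecidableEq ι] {A B : Matrix ι ι ℝ} {c : ℝ}

lemma dotProduct_mulVec_le_of_loe_smul_one (h : loe A (c • 1)) (x : ι → ℝ) :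
    x ⬝ᵥ (A *ᵥ x) ≤ c * (x ⬝ᵥ x) := by
  simpa [sub_mulVec, smul_mulVec] using h.dotProduct_mulVec_nonneg x

lemma le_dotProduct_mulVec_of_smul_one_loe (h : loe (c • 1) A) (x : ι → ℝ) :
    c * (x ⬝ᵥ x) ≤ x ⬝ᵥ (A *ᵥ x) := by
  simpa [sub_mulVec, smul_mulVec] using h.dotProduct_mulVec_nonneg x

lemma posDef_of_smul_one_loe (hc : 0 < c) (h : loe (c • 1) A) : A.PosDef := by
  simpa using (PosDef.one.smul hc).add_posSemidef h

-- Both inequalities are Schur complement criteria for the block matrix `[[B, 1], [1, A⁻¹]]`.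
lemma loe_inv_inv (hA : A.PosDef) (hB : B.PosDef) (h : loe A B) : loe B⁻¹ A⁻¹ := by
  have := hA.inv.isUnit.invertible
  have := hB.isUnit.invertible
  have hblock : (fromBlocks B 1 1ᴴ A⁻¹).PosSemidef := by
    rw [hA.inv.fromBlocks₂₂]
    simpa [loe, nonsing_inv_nonsing_inv A hA.det_pos.ne'.isUnit] using h
  rw [hB.fromBlocks₁₁] at hblock
  simpa [loe] using hblock

lemma abs_apply_le_of_loe_smul_one (hA : A.PosSemidef) (h : loe A (c • 1)) (i j : ι) :
    |A i j| ≤ c := by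
  have hsymm : A j i = A i j := by simpa using hA.isHermitian.apply i j
  have hdiag : ∀ k, A k k ≤ c := fun k => by simpa using h.diag_nonneg (i := k)
  have hsub := hA.dotProduct_mulVec_nonneg (Pi.single i 1 - Pi.single j 1)
  have hadd := hA.dotProduct_mulVec_nonneg (Pi.single i 1 + Pi.single j 1)
  simp only [star_trivial, mulVec_sub, mulVec_add, mulVec_single_one, dotProduct_sub,
    dotProduct_add, sub_dotProduct, add_dotProduct, single_one_dotProduct, col_apply,
    hsymm] at hsub hadd
  rw [abs_le]
  constructor <;> linarith [hdiag i, hdiag j]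

end LoewnerOrder

section OperatorNorm

open scoped Matrix.Norms.Operator

variable {ι : Type*} [Fintype ι]

lemma norm_le_card_mul_of_abs_apply_le {A : Matrix ι ι ℝ} {c : ℝ} (hc : 0 ≤ c)
    (h : ∀ i j, |A i j| ≤ c) : ‖A‖ ≤ Fintype.card ι * c := by
  lift c to NNReal using hc
  rw [linfty_opNorm_def]
  norm_cast
  refine Finset.sup_le fun i _ => ?_
  simpa using Finset.sum_le_card_nsmul Finset.univ (fun j => ‖A i j‖₊) c fun j _ => h i j

lemma norm_inv_sub_inv_le [DecidableEq ι] {A B : Matrix ι ι ℝ} (hA : IsUnit A) (hB : IsUnit B) :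
    ‖A⁻¹ - B⁻¹‖ ≤ ‖A⁻¹‖ * ‖A - B‖ * ‖B⁻¹‖ := by
  rw [inv_sub_inv (iff_of_true hA hB), norm_sub_rev A B]
  exact (norm_mul_le _ _).trans (mul_le_mul_of_nonneg_right (norm_mul_le _ _) (norm_nonneg _))

lemma abs_dotProduct_le (v w : ι → ℝ) : |v ⬝ᵥ w| ≤ Fintype.card ι * (‖v‖ * ‖w‖) := by
  have h : ∀ i ∈ Finset.univ, |v i * w i| ≤ ‖v‖ * ‖w‖ := fun i _ => by
    rw [abs_mul]
    exact mul_le_mul (norm_le_pi_norm v i) (norm_le_pi_norm w i) (abs_nonneg _) (norm_nonneg _)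
  simpa [dotProduct] using (Finset.abs_sum_le_sum_abs _ _).trans (Finset.sum_le_card_nsmul _ _ _ h)

lemma abs_dotProduct_mulVec_le (A : Matrix ι ι ℝ) (v w : ι → ℝ) :
    |v ⬝ᵥ (A *ᵥ w)| ≤ Fintype.card ι * (‖A‖ * (‖v‖ * ‖w‖)) :=
  calc |v ⬝ᵥ (A *ᵥ w)| ≤ Fintype.card ι * (‖v‖ * ‖A *ᵥ w‖) := abs_dotProduct_le _ _
    _ ≤ Fintype.card ι * (‖v‖ * (‖A‖ * ‖w‖)) := by gcongr; exact linfty_opNorm_mulVec A w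
    _ = Fintype.card ι * (‖A‖ * (‖v‖ * ‖w‖)) := by ring

lemma abs_dotProduct_mulVec_sub_dotProduct_mulVec_le (A B : Matrix ι ι ℝ) (v w : ι → ℝ) :
    |v ⬝ᵥ (A *ᵥ v) - w ⬝ᵥ (B *ᵥ w)| ≤
      Fintype.card ι * (‖A - B‖ * ‖v‖ ^ 2 + ‖B‖ * (‖v - w‖ * (‖v‖ + ‖w‖))) := by
  have hsplit : v ⬝ᵥ (A *ᵥ v) - w ⬝ᵥ (B *ᵥ w) =
      v ⬝ᵥ ((A - B) *ᵥ v) + (v - w) ⬝ᵥ (B *ᵥ v) + w ⬝ᵥ (B *ᵥ (v - w)) := by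
    simp only [sub_mulVec, mulVec_sub, dotProduct_sub, sub_dotProduct]
    ring
  rw [hsplit]
  refine (abs_add_three _ _ _).trans ?_
  linarith [abs_dotProduct_mulVec_le (A - B) v v, abs_dotProduct_mulVec_le B (v - w) v,
    abs_dotProduct_mulVec_le B w (v - w)]

lemma norm_sq_le_dotProduct_self (v : ι → ℝ) : ‖v‖ ^ 2 ≤ v ⬝ᵥ v := by
  have h0 : 0 ≤ v ⬝ᵥ v := dotProduct_self_star_nonneg v
  rw [← Real.le_sqrt (norm_nonneg _) h0, pi_norm_le_iff_of_nonneg (Real.sqrt_nonneg _)]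
  intro i
  refine Real.abs_le_sqrt ?_
  rw [sq]
  exact Finset.single_le_sum (f := fun j => v j * v j) (fun j _ => mul_self_nonneg _)
    (Finset.mem_univ i)

end OperatorNorm

section BoundedParams

variable {ι : Type*} [Fintype ι]

lemma enorm_sq_eq_dotProduct_self (v : ι → ℝ) : enorm v ^ 2 = v ⬝ᵥ v := by
  rw [enorm, Real.sq_sqrt (Finset.sum_nonneg fun i _ => sq_nonneg (v i))]
  simp only [dotProduct, sq]

lemma dotProduct_self_le_sq_of_enorm_le {v : ι → ℝ} {r : ℝ} (h : enorm v ≤ r) :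
    v ⬝ᵥ v ≤ r ^ 2 := by
  rw [← enorm_sq_eq_dotProduct_self]
  exact pow_le_pow_left₀ (Real.sqrt_nonneg _) h 2

/-- The parameter set of the class `𝒢_R`: `|m| ≤ R` and `R⁻² I ≼ S ≼ R² I`. Being invariant under
`S ↦ S⁻¹`, it also describes means paired with precision matrices. -/
structure BoundedParams [DecidableEq ι] (R : ℝ) (m : ι → ℝ) (S : Matrix ι ι ℝ) : Prop where
  enorm_le : enorm m ≤ R
  smul_one_loe : loe ((R ^ 2)⁻¹ • 1) S
  loe_smul_one : loe S (R ^ 2 • 1)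

namespace BoundedParams

open scoped Matrix.Norms.Operator

variable [DecidableEq ι] {R : ℝ} {m : ι → ℝ} {S : Matrix ι ι ℝ}

lemma posDef (hR : 0 < R) (h : BoundedParams R m S) : S.PosDef :=
  posDef_of_smul_one_loe (by positivity) h.smul_one_loe

lemma inv (hR : 0 < R) (h : BoundedParams R m S) : BoundedParams R m S⁻¹ := by
  have hinv : ∀ c : ℝ, 0 < c → (c • 1 : Matrix ι ι ℝ)⁻¹ = c⁻¹ • 1 := fun c hc =>
    inv_eq_right_inv (by simp [hc.ne'])
  have hone : ∀ c : ℝ, 0 < c → (c • 1 : Matrix ι ι ℝ).PosDef := fun c hc => PosDef.one.smul hc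
  have hR2 : 0 < R ^ 2 := by positivity
  refine ⟨h.enorm_le, ?_, ?_⟩
  · rw [← hinv _ hR2]
    exact loe_inv_inv (h.posDef hR) (hone _ hR2) h.loe_smul_one
  · rw [← inv_inv (R ^ 2), ← hinv _ (inv_pos.2 hR2)]
    exact loe_inv_inv (hone _ (inv_pos.2 hR2)) (h.posDef hR) h.smul_one_loe

lemma norm_mean_le (h : BoundedParams R m S) : ‖m‖ ≤ R :=
  abs_le_of_sq_le_sq' ((norm_sq_le_dotProduct_self m).trans
    (dotProduct_self_le_sq_of_enorm_le h.enorm_le)) ((Real.sqrt_nonneg _).trans h.enorm_le) |>.2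

lemma norm_matrix_le (hR : 0 < R) (h : BoundedParams R m S) : ‖S‖ ≤ Fintype.card ι * R ^ 2 :=
  norm_le_card_mul_of_abs_apply_le (sq_nonneg R)
    (abs_apply_le_of_loe_smul_one (h.posDef hR).posSemidef h.loe_smul_one)

end BoundedParams

end BoundedParams

section GaussKernel

variable {ι : Type*} [Fintype ι]

/-- The unnormalised Gaussian density `exp(-½ (x - m)ᵀ P (x - m))`, parametrised by the precision
matrix `P` (the inverse of the covariance) rather than by the covariance. -/
def gaussKernel (m : ι → ℝ) (P : Matrix ι ι ℝ) (x : ι → ℝ) : ℝ :=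
  Real.exp (-(1 / 2) * ((x - m) ⬝ᵥ (P *ᵥ (x - m))))

lemma gaussKernel_pos (m : ι → ℝ) (P : Matrix ι ι ℝ) (x : ι → ℝ) : 0 < gaussKernel m P x :=
  Real.exp_pos _

@[fun_prop]
lemma continuous_gaussKernel (m : ι → ℝ) (P : Matrix ι ι ℝ) : Continuous (gaussKernel m P) := by
  unfold gaussKernel
  fun_prop

lemma abs_exp_sub_exp_le {a b E : ℝ} (ha : Real.exp a ≤ E) (hb : Real.exp b ≤ E) :
    |Real.exp a - Real.exp b| ≤ E * |a - b| := by
  wlog h : b ≤ a generalizing a b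
  · rw [abs_sub_comm, abs_sub_comm a]
    exact this hb ha (le_of_not_ge h)
  rw [abs_of_nonneg (sub_nonneg.2 (Real.exp_le_exp.2 h)), abs_of_nonneg (sub_nonneg.2 h)]
  calc Real.exp a - Real.exp b = Real.exp a * (1 - Real.exp (b - a)) := by
        rw [mul_sub, ← Real.exp_add]; ring_nf
    _ ≤ Real.exp a * (a - b) :=
        mul_le_mul_of_nonneg_left (by linarith [Real.add_one_le_exp (b - a)]) (Real.exp_nonneg a)
    _ ≤ E * (a - b) := mul_le_mul_of_nonneg_right ha (sub_nonneg.2 h)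

variable [DecidableEq ι] {R : ℝ} {m m' : ι → ℝ} {P P' : Matrix ι ι ℝ}

lemma gaussKernel_le_exp (h : BoundedParams R m P) (x : ι → ℝ) :
    gaussKernel m P x ≤ Real.exp (1 / 2) * Real.exp (-((R ^ 2)⁻¹ / 4) * (x ⬝ᵥ x)) := by
  rw [gaussKernel, ← Real.exp_add, Real.exp_le_exp]
  have hquad := le_dotProduct_mulVec_of_smul_one_loe h.smul_one_loe (x - m)
  have hcenter : x ⬝ᵥ x / 2 - R ^ 2 ≤ (x - m) ⬝ᵥ (x - m) := by
    have := dotProduct_self_star_nonneg (x - (2 : ℝ) • m)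
    simp only [star_trivial, sub_dotProduct, dotProduct_sub, smul_dotProduct, dotProduct_smul,
      smul_eq_mul, dotProduct_comm m x] at this ⊢
    linarith [dotProduct_self_le_sq_of_enorm_le h.enorm_le]
  have hscale : (R ^ 2)⁻¹ * (x ⬝ᵥ x / 2 - R ^ 2) ≤ (R ^ 2)⁻¹ * ((x - m) ⬝ᵥ (x - m)) := by gcongr
  linarith [inv_mul_le_one (a := R ^ 2)]

lemma exp_le_gaussKernel (h : BoundedParams R m P) (x : ι → ℝ) :
    Real.exp (-(R ^ 2 * (x ⬝ᵥ x + R ^ 2))) ≤ gaussKernel m P x := by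
  rw [gaussKernel, Real.exp_le_exp]
  have hquad := dotProduct_mulVec_le_of_loe_smul_one h.loe_smul_one (x - m)
  have hcenter : (x - m) ⬝ᵥ (x - m) ≤ 2 * (x ⬝ᵥ x + R ^ 2) := by
    have := dotProduct_self_star_nonneg (x + m)
    simp only [star_trivial, sub_dotProduct, dotProduct_sub, add_dotProduct, dotProduct_add,
      dotProduct_comm m x] at this ⊢
    linarith [dotProduct_self_le_sq_of_enorm_le h.enorm_le]
  have hscale : R ^ 2 * ((x - m) ⬝ᵥ (x - m)) ≤ R ^ 2 * (2 * (x ⬝ᵥ x + R ^ 2)) := by gcongr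
  linarith

open scoped Matrix.Norms.Operator

lemma abs_quadForm_sub_le (hR : 0 < R) (h : BoundedParams R m P) (h' : BoundedParams R m' P')
    (x : ι → ℝ) :
    |(x - m) ⬝ᵥ (P *ᵥ (x - m)) - (x - m') ⬝ᵥ (P' *ᵥ (x - m'))| ≤
      2 * (Fintype.card ι * (1 + Fintype.card ι * R ^ 2) * (1 + R ^ 2)) * (1 + x ⬝ᵥ x) *
        (‖m - m'‖ + ‖P - P'‖) := by
  set n : ℝ := (Fintype.card ι : ℝ)
  set W := (1 + R ^ 2) * (1 + x ⬝ᵥ x)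
  have hx := norm_sq_le_dotProduct_self x
  have hW : 1 ≤ W := by nlinarith [sq_nonneg ‖x‖, sq_nonneg R]
  have hnorm_sq : (‖x‖ + R) ^ 2 ≤ W := by
    nlinarith [sq_nonneg (‖x‖ * R - 1), mul_le_mul_of_nonneg_left hx (sq_nonneg R)]
  have hnorm : ∀ {a Q}, BoundedParams R a Q → ‖x - a‖ ≤ ‖x‖ + R := fun ha =>
    (norm_sub_le _ _).trans (add_le_add_right ha.norm_mean_le _)
  have hsq : ‖x - m‖ ^ 2 ≤ W := (pow_le_pow_left₀ (norm_nonneg _) (hnorm h) 2).trans hnorm_sq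
  have hsum : ‖x - m‖ + ‖x - m'‖ ≤ 2 * W := by
    nlinarith [hnorm h, hnorm h', sq_nonneg (‖x‖ + R - 1)]
  have hdiff : ‖x - m - (x - m')‖ = ‖m - m'‖ := by rw [sub_sub_sub_cancel_left, norm_sub_rev]
  calc |(x - m) ⬝ᵥ (P *ᵥ (x - m)) - (x - m') ⬝ᵥ (P' *ᵥ (x - m'))|
      ≤ n * (‖P - P'‖ * ‖x - m‖ ^ 2 + ‖P'‖ * (‖m - m'‖ * (‖x - m‖ + ‖x - m'‖))) :=
        hdiff ▸ abs_dotProduct_mulVec_sub_dotProduct_mulVec_le P P' (x - m) (x - m')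
    _ ≤ n * (‖P - P'‖ * W + n * R ^ 2 * (‖m - m'‖ * (2 * W))) := by
        gcongr
        exact h'.norm_matrix_le hR
    _ ≤ n * (2 * (1 + n * R ^ 2) * W * (‖m - m'‖ + ‖P - P'‖)) := by
        gcongr
        have hm : 0 ≤ W * ‖m - m'‖ := by positivity
        have hP : 0 ≤ (1 + 2 * (n * R ^ 2)) * (W * ‖P - P'‖) := by positivity
        linarith
    _ = _ := by ring

lemma abs_gaussKernel_sub_le (hR : 0 < R) (h : BoundedParams R m P) (h' : BoundedParams R m' P')
    (x : ι → ℝ) :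
    |gaussKernel m P x - gaussKernel m' P' x| ≤
      Real.exp (1 / 2) * Real.exp (-((R ^ 2)⁻¹ / 4) * (x ⬝ᵥ x)) *
        (Fintype.card ι * (1 + Fintype.card ι * R ^ 2) * (1 + R ^ 2) * (1 + x ⬝ᵥ x) *
          (‖m - m'‖ + ‖P - P'‖)) := by
  refine (abs_exp_sub_exp_le (gaussKernel_le_exp h x) (gaussKernel_le_exp h' x)).trans ?_
  gcongr ?_ * ?_
  rw [← mul_sub, abs_mul, abs_neg, abs_of_nonneg (by norm_num)]
  linarith [abs_quadForm_sub_le hR h h' x]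

end GaussKernel

section Normalisation

variable {α : Type*} [MeasurableSpace α] {μ : Measure α} {G f f' : α → ℝ}

lemma integral_withDensity_ofReal_normalized (hf : Measurable f) (hf0 : 0 ≤ f) (φ : α → ℝ) :
    ∫ x, φ x ∂μ.withDensity (fun x => ENNReal.ofReal (f x / ∫ y, f y ∂μ)) =
      (∫ x, φ x * f x ∂μ) / ∫ x, f x ∂μ := by
  have h0 : ∀ x, 0 ≤ f x / ∫ y, f y ∂μ := fun x => div_nonneg (hf0 x) (integral_nonneg hf0)
  rw [integral_withDensity_eq_integral_toReal_smul (hf.div_const _).ennreal_ofReal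
    (ae_of_all _ fun _ => ENNReal.ofReal_lt_top), ← integral_div]
  simp only [ENNReal.toReal_ofReal (h0 _), smul_eq_mul, mul_comm (f _), mul_div_assoc,
    div_mul_eq_mul_div]

lemma integrable_mul_of_abs_le {φ : α → ℝ} (hf : Measurable f) (hf0 : 0 ≤ f)
    (hint : Integrable (fun x => G x * f x) μ) (hφ : Measurable φ) (hφG : ∀ x, |φ x| ≤ G x) :
    Integrable (fun x => φ x * f x) μ := by
  refine hint.mono' (hφ.mul hf).aestronglyMeasurable (ae_of_all _ fun x => ?_)
  rw [norm_mul, Real.norm_of_nonneg (hf0 x)]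
  exact mul_le_mul_of_nonneg_right (hφG x) (hf0 x)

lemma abs_integral_mul_sub_integral_mul_le {φ : α → ℝ} (hf : Measurable f) (hf' : Measurable f')
    (hf0 : 0 ≤ f) (hf0' : 0 ≤ f') (hint : Integrable (fun x => G x * f x) μ)
    (hint' : Integrable (fun x => G x * f' x) μ) (hφ : Measurable φ) (hφG : ∀ x, |φ x| ≤ G x) :
    |(∫ x, φ x * f x ∂μ) - ∫ x, φ x * f' x ∂μ| ≤ ∫ x, G x * |f x - f' x| ∂μ := by
  have hG0 : ∀ x, 0 ≤ G x := fun x => (abs_nonneg _).trans (hφG x)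
  have hdiff : Integrable (fun x => G x * |f x - f' x|) μ := by
    refine (hint.sub hint').abs.congr (ae_of_all _ fun x => ?_)
    simp only [Pi.sub_apply, ← mul_sub, abs_mul, abs_of_nonneg (hG0 x)]
  rw [← integral_sub (integrable_mul_of_abs_le hf hf0 hint hφ hφG)
    (integrable_mul_of_abs_le hf' hf0' hint' hφ hφG), ← Real.norm_eq_abs]
  refine norm_integral_le_of_norm_le hdiff (ae_of_all _ fun x => ?_)
  rw [← mul_sub, norm_mul]
  exact mul_le_mul_of_nonneg_right (hφG x) (abs_nonneg _)

lemma dG_withDensity_normalized_le (hG : ∀ x, 1 ≤ G x) (hf : Measurable f) (hf' : Measurable f')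
    (hf0 : 0 ≤ f) (hf0' : 0 ≤ f') (hint : Integrable (fun x => G x * f x) μ)
    (hint' : Integrable (fun x => G x * f' x) μ) (hZ : 0 < ∫ x, f x ∂μ)
    (hZ' : 0 < ∫ x, f' x ∂μ) :
    dG G (μ.withDensity fun x => ENNReal.ofReal (f x / ∫ y, f y ∂μ))
        (μ.withDensity fun x => ENNReal.ofReal (f' x / ∫ y, f' y ∂μ)) ≤
      (1 + (∫ x, G x * f' x ∂μ) / ∫ x, f' x ∂μ) / (∫ x, f x ∂μ) *
        ∫ x, G x * |f x - f' x| ∂μ := by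
  have hG0 : ∀ x, 0 ≤ G x := fun x => zero_le_one.trans (hG x)
  set Z := ∫ x, f x ∂μ
  set Z' := ∫ x, f' x ∂μ
  set I' := ∫ x, G x * f' x ∂μ
  set D := ∫ x, G x * |f x - f' x| ∂μ
  have hI' : 0 ≤ I' := integral_nonneg fun x => mul_nonneg (hG0 x) (hf0' x)
  have hD : 0 ≤ D := integral_nonneg fun x => mul_nonneg (hG0 x) (abs_nonneg _)
  refine Real.iSup_le (fun ⟨φ, hφ, hφG⟩ => ?_) (by positivity)
  rw [integral_withDensity_ofReal_normalized hf hf0,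
    integral_withDensity_ofReal_normalized hf' hf0']
  set A := ∫ x, φ x * f x ∂μ
  set A' := ∫ x, φ x * f' x ∂μ
  have hA : |A - A'| ≤ D :=
    abs_integral_mul_sub_integral_mul_le hf hf' hf0 hf0' hint hint' hφ hφG
  have hZsub : |Z - Z'| ≤ D := by
    simpa using abs_integral_mul_sub_integral_mul_le (φ := fun _ => 1) hf hf' hf0 hf0' hint hint'
      measurable_const (by simpa using hG)
  have hA' : |A'| ≤ I' := by
    rw [← Real.norm_eq_abs]
    refine norm_integral_le_of_norm_le hint' (ae_of_all _ fun x => ?_)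
    rw [norm_mul, Real.norm_of_nonneg (hf0' x)]
    exact mul_le_mul_of_nonneg_right (hφG x) (hf0' x)
  have hsplit : A / Z - A' / Z' = (A - A') / Z - A' / Z' * (Z - Z') / Z := by field_simp; ring
  calc |A / Z - A' / Z'| ≤ |A - A'| / Z + |A'| / Z' * |Z - Z'| / Z := by
        rw [hsplit]
        refine (abs_sub _ _).trans_eq ?_
        simp only [abs_div, abs_mul, abs_of_pos hZ, abs_of_pos hZ']
    _ ≤ D / Z + I' / Z' * D / Z := by gcongr
    _ = (1 + I' / Z') / Z * D := by ring

lemma condM_const_mul {d K : ℕ} {a : ℝ} (ha : a ≠ 0) (f : Vec d × Vec K → ℝ) (y : Vec K) :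
    condM (fun p => a * f p) y = condM f y := by
  simp only [condM, integral_const_mul, mul_div_mul_left _ _ ha]

end Normalisation

section Slices

variable {ι κ : Type*} [Fintype ι] [Fintype κ]

lemma one_add_pow_mul_exp_neg_le {b s : ℝ} (hb : 0 < b) (hs : 0 ≤ s) (k : ℕ) :
    (1 + s) ^ k * Real.exp (-b * s) ≤
      k.factorial * (2 / b) ^ k * Real.exp (b / 2) * Real.exp (-(b / 2) * s) := by
  have hpow : (1 + s) ^ k ≤ k.factorial * (2 / b) ^ k * Real.exp (b / 2 * (1 + s)) := by
    have := Real.pow_div_factorial_le_exp (b / 2 * (1 + s)) (by positivity) k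
    rw [div_le_iff₀ (by positivity), mul_pow] at this
    calc (1 + s) ^ k = (2 / b) ^ k * ((b / 2) ^ k * (1 + s) ^ k) := by
          rw [← mul_assoc, ← mul_pow, div_mul_div_cancel₀ hb.ne', div_self two_ne_zero, one_pow,
            one_mul]
      _ ≤ (2 / b) ^ k * (Real.exp (b / 2 * (1 + s)) * k.factorial) := by gcongr
      _ = _ := by ring
  calc (1 + s) ^ k * Real.exp (-b * s)
      ≤ k.factorial * (2 / b) ^ k * Real.exp (b / 2 * (1 + s)) * Real.exp (-b * s) := by gcongr
    _ = _ := by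
      rw [mul_assoc, mul_assoc _ (Real.exp (b / 2)), ← Real.exp_add, ← Real.exp_add]
      ring_nf

lemma integrable_exp_neg_mul_dotProduct_self {b : ℝ} (hb : 0 < b) :
    Integrable fun x : ι → ℝ => Real.exp (-b * (x ⬝ᵥ x)) := by
  have hprod := Integrable.fintype_prod (ι := ι) (f := fun _ t => Real.exp (-b * t ^ 2))
    (μ := fun _ => volume) fun _ => integrable_exp_neg_mul_sq hb
  simpa only [dotProduct, Finset.mul_sum, Real.exp_sum, sq, volume_pi] using hprod

lemma integrable_one_add_pow_mul_exp_neg {b : ℝ} (hb : 0 < b) (k : ℕ) :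
    Integrable fun x : ι → ℝ => (1 + x ⬝ᵥ x) ^ k * Real.exp (-b * (x ⬝ᵥ x)) := by
  refine ((integrable_exp_neg_mul_dotProduct_self (half_pos hb)).const_mul
    (k.factorial * (2 / b) ^ k * Real.exp (b / 2))).mono'
    (Continuous.aestronglyMeasurable (by fun_prop)) (ae_of_all _ fun x => ?_)
  have hx : 0 ≤ x ⬝ᵥ x := dotProduct_self_star_nonneg x
  rw [Real.norm_of_nonneg (by positivity)]
  exact one_add_pow_mul_exp_neg_le hb hx k

/-- The Gaussian envelope `√e exp(-|u|² / (4R²))` of all the slices `u ↦ gaussKernel m P (u, y)`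
with parameters bounded by `R`. -/
def sliceEnvelope (R : ℝ) (u : ι → ℝ) : ℝ :=
  Real.exp (1 / 2) * Real.exp (-((R ^ 2)⁻¹ / 4) * (u ⬝ᵥ u))

lemma integrable_one_add_pow_mul_sliceEnvelope {R : ℝ} (hR : 0 < R) (k : ℕ) :
    Integrable fun u : ι → ℝ => (1 + u ⬝ᵥ u) ^ k * sliceEnvelope R u := by
  simpa only [sliceEnvelope, mul_left_comm] using
    (integrable_one_add_pow_mul_exp_neg (by positivity) k).const_mul (Real.exp (1 / 2))

lemma exp_dotProduct_sumElim_le_sliceEnvelope (R : ℝ) (u : ι → ℝ) (y : κ → ℝ) :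
    Real.exp (1 / 2) * Real.exp (-((R ^ 2)⁻¹ / 4) * (Sum.elim u y ⬝ᵥ Sum.elim u y)) ≤
      sliceEnvelope R u := by
  have hy : 0 ≤ y ⬝ᵥ y := dotProduct_self_star_nonneg y
  rw [sliceEnvelope, sumElim_dotProduct_sumElim, neg_mul, neg_mul]
  gcongr
  linarith

lemma continuous_gaussKernel_sumElim (m : ι ⊕ κ → ℝ) (P : Matrix (ι ⊕ κ) (ι ⊕ κ) ℝ) (y : κ → ℝ) :
    Continuous fun u => gaussKernel m P (Sum.elim u y) := by
  refine (continuous_gaussKernel m P).comp (continuous_pi fun i => ?_)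
  cases i with
  | inl i => exact continuous_apply i
  | inr j => exact continuous_const

variable [DecidableEq ι] [DecidableEq κ] {R : ℝ} {m : ι ⊕ κ → ℝ} {P : Matrix (ι ⊕ κ) (ι ⊕ κ) ℝ}

lemma gaussKernel_sumElim_le (h : BoundedParams R m P) (u : ι → ℝ) (y : κ → ℝ) :
    gaussKernel m P (Sum.elim u y) ≤ sliceEnvelope R u :=
  (gaussKernel_le_exp h _).trans (exp_dotProduct_sumElim_le_sliceEnvelope R u y)

lemma integrable_one_add_mul_gaussKernel_sumElim (hR : 0 < R) (h : BoundedParams R m P)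
    (y : κ → ℝ) :
    Integrable fun u => (1 + u ⬝ᵥ u) * gaussKernel m P (Sum.elim u y) := by
  have hcont := continuous_gaussKernel_sumElim m P y
  refine (integrable_one_add_pow_mul_sliceEnvelope hR 1).mono'
    (Continuous.aestronglyMeasurable (by fun_prop)) (ae_of_all _ fun u => ?_)
  have hu : 0 ≤ u ⬝ᵥ u := dotProduct_self_star_nonneg u
  have hk := gaussKernel_pos m P (Sum.elim u y)
  rw [Real.norm_of_nonneg (by positivity), pow_one]
  gcongr
  exact gaussKernel_sumElim_le h u y

variable (ι κ) in
lemma exists_integral_one_add_mul_gaussKernel_sumElim_le {R : ℝ} (hR : 0 < R) :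
    ∃ I : ℝ, 0 < I ∧ ∀ (y : κ → ℝ) (m : ι ⊕ κ → ℝ) (P : Matrix (ι ⊕ κ) (ι ⊕ κ) ℝ),
      BoundedParams R m P → ∫ u : ι → ℝ, (1 + u ⬝ᵥ u) * gaussKernel m P (Sum.elim u y) ≤ I := by
  refine ⟨max 1 (∫ u : ι → ℝ, (1 + u ⬝ᵥ u) * sliceEnvelope R u), by positivity,
    fun y m P h => le_max_of_le_right ?_⟩
  refine integral_mono (integrable_one_add_mul_gaussKernel_sumElim hR h y)
    (by simpa using integrable_one_add_pow_mul_sliceEnvelope hR 1) fun u => ?_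
  have hu : 0 ≤ u ⬝ᵥ u := dotProduct_self_star_nonneg u
  exact mul_le_mul_of_nonneg_left (gaussKernel_sumElim_le h u y) (by positivity)

lemma integrable_gaussKernel_sumElim (hR : 0 < R) (h : BoundedParams R m P) (y : κ → ℝ) :
    Integrable fun u : ι → ℝ => gaussKernel m P (Sum.elim u y) := by
  refine (by simpa using integrable_one_add_pow_mul_sliceEnvelope hR 0 :
    Integrable fun u : ι → ℝ => sliceEnvelope R u).mono'
    (continuous_gaussKernel_sumElim m P y).aestronglyMeasurable (ae_of_all _ fun u => ?_)
  rw [Real.norm_of_nonneg (gaussKernel_pos _ _ _).le]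
  exact gaussKernel_sumElim_le h u y

variable (ι κ) in
lemma exists_le_integral_gaussKernel_sumElim {R : ℝ} (hR : 0 < R) (r : ℝ) :
    ∃ z : ℝ, 0 < z ∧ ∀ y : κ → ℝ, enorm y ≤ r →
      ∀ (m : ι ⊕ κ → ℝ) (P : Matrix (ι ⊕ κ) (ι ⊕ κ) ℝ),
        BoundedParams R m P → z ≤ ∫ u : ι → ℝ, gaussKernel m P (Sum.elim u y) := by
  have hR2 : 0 < R ^ 2 := by positivity
  set E : (ι → ℝ) → ℝ := fun u =>
    Real.exp (-(R ^ 2 * (r ^ 2 + R ^ 2))) * Real.exp (-R ^ 2 * (u ⬝ᵥ u))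
  have hE : Integrable E := (integrable_exp_neg_mul_dotProduct_self hR2).const_mul _
  refine ⟨∫ u, E u, ?_, fun y hy m P h =>
    integral_mono hE (integrable_gaussKernel_sumElim hR h y) fun u => ?_⟩
  · rw [integral_const_mul]
    exact mul_pos (Real.exp_pos _)
      (integral_exp_pos (integrable_exp_neg_mul_dotProduct_self hR2))
  · refine le_trans ?_ (exp_le_gaussKernel h _)
    simp only [E]
    rw [← Real.exp_add, sumElim_dotProduct_sumElim, Real.exp_le_exp]
    have hyr := mul_le_mul_of_nonneg_left (dotProduct_self_le_sq_of_enorm_le hy) hR2.le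
    linarith

open scoped Matrix.Norms.Operator

lemma one_add_mul_abs_gaussKernel_sumElim_sub_le {m' : ι ⊕ κ → ℝ} {P' : Matrix (ι ⊕ κ) (ι ⊕ κ) ℝ}
    (hR : 0 < R) (h : BoundedParams R m P) (h' : BoundedParams R m' P') {r : ℝ} {y : κ → ℝ}
    (hy : enorm y ≤ r) (u : ι → ℝ) :
    (1 + u ⬝ᵥ u) * |gaussKernel m P (Sum.elim u y) - gaussKernel m' P' (Sum.elim u y)| ≤
      Fintype.card (ι ⊕ κ) * (1 + Fintype.card (ι ⊕ κ) * R ^ 2) * (1 + R ^ 2) * (1 + r ^ 2) *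
        (‖m - m'‖ + ‖P - P'‖) * ((1 + u ⬝ᵥ u) ^ 2 * sliceEnvelope R u) := by
  set c : ℝ := Fintype.card (ι ⊕ κ) * (1 + Fintype.card (ι ⊕ κ) * R ^ 2) * (1 + R ^ 2)
  have hu : 0 ≤ u ⬝ᵥ u := dotProduct_self_star_nonneg u
  have hE : 0 ≤ sliceEnvelope R u := by unfold sliceEnvelope; positivity
  have hx : 0 ≤ Sum.elim u y ⬝ᵥ Sum.elim u y := dotProduct_self_star_nonneg (Sum.elim u y)
  have hweight : 1 + Sum.elim u y ⬝ᵥ Sum.elim u y ≤ (1 + r ^ 2) * (1 + u ⬝ᵥ u) := by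
    rw [sumElim_dotProduct_sumElim]
    nlinarith [dotProduct_self_le_sq_of_enorm_le hy, mul_nonneg (sq_nonneg r) hu]
  calc _ ≤ (1 + u ⬝ᵥ u) * (sliceEnvelope R u *
          (c * (1 + Sum.elim u y ⬝ᵥ Sum.elim u y) * (‖m - m'‖ + ‖P - P'‖))) := by
        gcongr
        refine (abs_gaussKernel_sub_le hR h h' _).trans ?_
        gcongr
        exact exp_dotProduct_sumElim_le_sliceEnvelope R u y
    _ ≤ (1 + u ⬝ᵥ u) * (sliceEnvelope R u *
          (c * ((1 + r ^ 2) * (1 + u ⬝ᵥ u)) * (‖m - m'‖ + ‖P - P'‖))) := by gcongr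
    _ = _ := by ring

variable (ι κ) in
lemma exists_integral_one_add_mul_abs_gaussKernel_sumElim_sub_le {R : ℝ} (hR : 0 < R) (r : ℝ) :
    ∃ L : ℝ, 0 < L ∧ ∀ y : κ → ℝ, enorm y ≤ r →
      ∀ (m m' : ι ⊕ κ → ℝ) (P P' : Matrix (ι ⊕ κ) (ι ⊕ κ) ℝ),
        BoundedParams R m P → BoundedParams R m' P' →
        ∫ u : ι → ℝ, (1 + u ⬝ᵥ u) *
            |gaussKernel m P (Sum.elim u y) - gaussKernel m' P' (Sum.elim u y)| ≤
          L * (‖m - m'‖ + ‖P - P'‖) := by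
  set c : ℝ := Fintype.card (ι ⊕ κ) * (1 + Fintype.card (ι ⊕ κ) * R ^ 2) * (1 + R ^ 2) * (1 + r ^ 2)
  set J := ∫ u : ι → ℝ, (1 + u ⬝ᵥ u) ^ 2 * sliceEnvelope R u
  refine ⟨max 1 (c * J), by positivity, fun y hy m m' P P' h h' => ?_⟩
  calc _ ≤ ∫ u : ι → ℝ, c * (‖m - m'‖ + ‖P - P'‖) * ((1 + u ⬝ᵥ u) ^ 2 * sliceEnvelope R u) := by
        refine integral_mono_of_nonneg (ae_of_all _ fun u => ?_)
          ((integrable_one_add_pow_mul_sliceEnvelope hR 2).const_mul _)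
          (ae_of_all _ (one_add_mul_abs_gaussKernel_sumElim_sub_le hR h h' hy))
        have hu : 0 ≤ u ⬝ᵥ u := dotProduct_self_star_nonneg u
        positivity
    _ = c * J * (‖m - m'‖ + ‖P - P'‖) := by rw [integral_const_mul]; ring
    _ ≤ max 1 (c * J) * (‖m - m'‖ + ‖P - P'‖) := by gcongr; exact le_max_right _ _

end Slices

section Conditioning

open scoped Matrix.Norms.Operator

lemma gw_eq_one_add_dotProduct_self {n : ℕ} (v : Vec n) : gw v = 1 + v ⬝ᵥ v := by
  simp only [gw, dotProduct, sq]

variable (d K) in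
lemma exists_dG_condM_gaussKernel_le {R : ℝ} (hR : 0 < R) (r : ℝ) :
    ∃ C : ℝ, 0 < C ∧ ∀ y : Vec K, enorm y ≤ r →
      ∀ (m m' : Fin d ⊕ Fin K → ℝ) (P P' : Matrix (Fin d ⊕ Fin K) (Fin d ⊕ Fin K) ℝ),
        BoundedParams R m P → BoundedParams R m' P' →
        dG gw (condM (fun p : Vec d × Vec K => gaussKernel m P (Sum.elim p.1 p.2)) y)
            (condM (fun p => gaussKernel m' P' (Sum.elim p.1 p.2)) y) ≤
          C * (‖m - m'‖ + ‖P - P'‖) := by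
  obtain ⟨z, hz, hmass⟩ := exists_le_integral_gaussKernel_sumElim (Fin d) (Fin K) hR r
  obtain ⟨I, hI, hweight⟩ :=
    exists_integral_one_add_mul_gaussKernel_sumElim_le (Fin d) (Fin K) hR
  obtain ⟨L, hL, hlip⟩ :=
    exists_integral_one_add_mul_abs_gaussKernel_sumElim_sub_le (Fin d) (Fin K) hR r
  refine ⟨(1 + I / z) / z * L, by positivity, fun y hy m m' P P' h h' => ?_⟩
  have hgw : ∀ v : Vec d, 1 ≤ gw v := fun v => by
    rw [gw_eq_one_add_dotProduct_self]
    exact le_add_of_nonneg_right (dotProduct_self_star_nonneg v)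
  simp only [← gw_eq_one_add_dotProduct_self] at hweight hlip
  have hint : ∀ {a Q}, BoundedParams R a Q →
      Integrable fun u : Vec d => gw u * gaussKernel a Q (Sum.elim u y) := fun ha => by
    simpa only [gw_eq_one_add_dotProduct_self] using
      integrable_one_add_mul_gaussKernel_sumElim hR ha y
  have hZ := hmass y hy m P h
  have hZ' := hmass y hy m' P' h'
  calc _ ≤ (1 + (∫ u, gw u * gaussKernel m' P' (Sum.elim u y)) /
            ∫ u : Vec d, gaussKernel m' P' (Sum.elim u y)) /
          (∫ u : Vec d, gaussKernel m P (Sum.elim u y)) *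
        ∫ u, gw u * |gaussKernel m P (Sum.elim u y) - gaussKernel m' P' (Sum.elim u y)| :=
        dG_withDensity_normalized_le hgw (continuous_gaussKernel_sumElim m P y).measurable
          (continuous_gaussKernel_sumElim m' P' y).measurable
          (fun _ => (gaussKernel_pos _ _ _).le) (fun _ => (gaussKernel_pos _ _ _).le)
          (hint h) (hint h') (hz.trans_le hZ) (hz.trans_le hZ')
    _ ≤ (1 + I / z) / z * (L * (‖m - m'‖ + ‖P - P'‖)) := by
        gcongr
        · exact integral_nonneg fun u => mul_nonneg (zero_le_one.trans (hgw u)) (abs_nonneg _)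
        · exact hweight y m' P' h'
        · exact hlip y hy m m' P P' h h'
    _ = _ := by ring

end Conditioning

section MultivariateGaussian

open ProbabilityTheory

lemma pi_withDensity_ofReal {ι : Type*} [Fintype ι] {α : ι → Type*} [∀ i, MeasurableSpace (α i)]
    {μ : ∀ i, Measure (α i)} [∀ i, SigmaFinite (μ i)] {f : ∀ i, α i → ℝ}
    (hf : ∀ i, Integrable (f i) (μ i)) (hf0 : ∀ i, 0 ≤ f i) :
    Measure.pi (fun i => (μ i).withDensity fun t => ENNReal.ofReal (f i t)) =
      (Measure.pi μ).withDensity fun x => ENNReal.ofReal (∏ i, f i (x i)) := by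
  have : ∀ i, SigmaFinite ((μ i).withDensity fun t => ENNReal.ofReal (f i t)) := fun i =>
    SigmaFinite.withDensity_ofReal _
  refine (Measure.pi_eq fun s hs => ?_)
  rw [withDensity_apply _ (.univ_pi hs), Measure.restrict_pi_pi,
    ← ofReal_integral_eq_lintegral_ofReal
      (Integrable.fintype_prod_dep fun i => (hf i).restrict)
      (ae_of_all _ fun x => Finset.prod_nonneg fun i _ => hf0 i (x i)),
    integral_fintype_prod_eq_prod,
    ENNReal.ofReal_prod_of_nonneg fun i _ => integral_nonneg (hf0 i)]
  refine Finset.prod_congr rfl fun i _ => ?_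
  rw [withDensity_apply _ (hs i),
    ofReal_integral_eq_lintegral_ofReal (hf i).restrict (ae_of_all _ (hf0 i))]

lemma map_withDensity_comp {α β : Type*} [MeasurableSpace α] [MeasurableSpace β] {μ : Measure α}
    {T : α → β} {g : β → ℝ≥0∞} (hT : Measurable T) (hg : Measurable g) :
    (μ.withDensity (g ∘ T)).map T = (μ.map T).withDensity g := by
  ext s hs
  rw [Measure.map_apply hT hs, withDensity_apply _ (hT hs), withDensity_apply _ hs,
    setLIntegral_map hs hg hT]
  rfl

variable {ι : Type*} [Fintype ι] [DecidableEq ι]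

lemma map_mulVec_add_volume {A : Matrix ι ι ℝ} (hA : A.det ≠ 0) (m : ι → ℝ) :
    (volume : Measure (ι → ℝ)).map (fun z => m + A *ᵥ z) =
      ENNReal.ofReal |A.det⁻¹| • volume := by
  have hcomp : (fun z => m + A *ᵥ z) = (m + ·) ∘ toLin' A := by ext; simp
  have hlin : Measurable (toLin' A) := (LinearMap.continuous_of_finiteDimensional _).measurable
  rw [hcomp, ← Measure.map_map (measurable_const_add m) hlin,
    Real.map_matrix_volume_pi_eq_smul_volume_pi hA, Measure.map_smul,
    map_add_left_eq_self]

lemma prod_gaussianPDFReal_eq_gaussKernel (z : ι → ℝ) :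
    ∏ i, gaussianPDFReal 0 1 (z i) =
      (Real.sqrt ((2 * Real.pi) ^ Fintype.card ι))⁻¹ * gaussKernel 0 1 z := by
  have hexponent : ∑ i, -z i ^ 2 / 2 = -(1 / 2) * (z ⬝ᵥ z) := by
    rw [dotProduct, Finset.mul_sum]
    exact Finset.sum_congr rfl fun i _ => by ring
  have hsqrt : Real.sqrt ((2 * Real.pi) ^ Fintype.card ι) =
      Real.sqrt (2 * Real.pi) ^ Fintype.card ι := by
    simpa only [Finset.prod_const, Finset.card_univ] using
      Real.sqrt_prod (Finset.univ : Finset ι) fun _ _ => Real.two_pi_pos.le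
  simp only [gaussianPDFReal, gaussKernel, Finset.prod_mul_distrib, ← Real.exp_sum,
    Finset.prod_const, Finset.card_univ, NNReal.coe_one, mul_one, inv_pow, sub_zero, one_mulVec,
    hexponent, hsqrt]

lemma gaussKernel_add_mulVec {A : Matrix ι ι ℝ} (hA : IsUnit A.det) (m z : ι → ℝ) :
    gaussKernel m (A * Aᵀ)⁻¹ (m + A *ᵥ z) = gaussKernel 0 1 z := by
  have hquad : (A *ᵥ z) ⬝ᵥ ((A * Aᵀ)⁻¹ *ᵥ (A *ᵥ z)) = z ⬝ᵥ z := by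
    rw [Matrix.mul_inv_rev, mulVec_mulVec, mul_assoc, nonsing_inv_mul _ hA, mul_one,
      ← transpose_nonsing_inv, mulVec_transpose, ← dotProduct_comm, ← dotProduct_mulVec,
      mulVec_mulVec, nonsing_inv_mul _ hA, one_mulVec]
  rw [gaussKernel, gaussKernel, add_sub_cancel_left, hquad, sub_zero, one_mulVec]

lemma inv_sqrt_mul_det_mul_transpose {A : Matrix ι ι ℝ} {c : ℝ} (hc : 0 ≤ c) :
    (Real.sqrt (c * (A * Aᵀ).det))⁻¹ = (Real.sqrt c)⁻¹ * |A.det⁻¹| := by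
  rw [det_mul, det_transpose, Real.sqrt_mul hc, Real.sqrt_mul_self_eq_abs, mul_inv, abs_inv]

lemma map_pi_gaussianReal_add_mulVec {A : Matrix ι ι ℝ} (hA : A.det ≠ 0) (m : ι → ℝ) :
    (Measure.pi fun _ => gaussianReal 0 1).map (fun z => m + A *ᵥ z) =
      volume.withDensity fun x => ENNReal.ofReal
        ((Real.sqrt ((2 * Real.pi) ^ Fintype.card ι * (A * Aᵀ).det))⁻¹ *
          gaussKernel m (A * Aᵀ)⁻¹ x) := by
  have hpi : (Measure.pi fun _ : ι => gaussianReal 0 1) =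
      volume.withDensity ((fun x => ENNReal.ofReal
        ((Real.sqrt ((2 * Real.pi) ^ Fintype.card ι))⁻¹ * gaussKernel m (A * Aᵀ)⁻¹ x)) ∘
          fun z => m + A *ᵥ z) := by
    simp only [gaussianReal_of_var_ne_zero 0 one_ne_zero, gaussianPDF_def, Function.comp_def,
      gaussKernel_add_mulVec hA.isUnit, ← prod_gaussianPDFReal_eq_gaussKernel, volume_pi]
    exact pi_withDensity_ofReal (fun _ => integrable_gaussianPDFReal 0 1)
      fun _ => gaussianPDFReal_nonneg 0 1
  have hdens : Measurable fun x => ENNReal.ofReal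
      ((Real.sqrt ((2 * Real.pi) ^ Fintype.card ι))⁻¹ * gaussKernel m (A * Aᵀ)⁻¹ x) :=
    (continuous_const.mul (continuous_gaussKernel _ _)).measurable.ennreal_ofReal
  rw [hpi, map_withDensity_comp (Continuous.measurable (by fun_prop))
    hdens, map_mulVec_add_volume hA, withDensity_smul_measure,
    ← withDensity_smul _ hdens]
  congr with x
  rw [Pi.smul_apply, smul_eq_mul, ← ENNReal.ofReal_mul (abs_nonneg _),
    inv_sqrt_mul_det_mul_transpose (by positivity)]
  ring_nf

open scoped MatrixOrder in
lemma map_ofLp_multivariateGaussian {S : Matrix ι ι ℝ} (hS : S.PosDef) (m : ι → ℝ) :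
    (multivariateGaussian (WithLp.toLp 2 m) S).map WithLp.ofLp =
      volume.withDensity fun x => ENNReal.ofReal
        ((Real.sqrt ((2 * Real.pi) ^ Fintype.card ι * S.det))⁻¹ * gaussKernel m S⁻¹ x) := by
  set A := CFC.sqrt S
  have hAA : A * Aᵀ = S := by
    rw [← conjTranspose_eq_transpose_of_trivial, (CFC.sqrt_nonneg S).posSemidef.isHermitian]
    exact CFC.sqrt_mul_sqrt_self S hS.posSemidef.nonneg
  have hA : A.det ≠ 0 := fun h => hS.det_pos.ne' (by rw [← hAA, det_mul, h, zero_mul])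
  rw [← hAA, ← map_pi_gaussianReal_add_mulVec hA, hAA, multivariateGaussian,
    ← map_pi_eq_stdGaussian, Measure.map_map (by fun_prop) (by fun_prop),
    Measure.map_map (by fun_prop) (by fun_prop)]
  rfl

end MultivariateGaussian

section JointGaussian

open ProbabilityTheory

variable {mu : Vec d} {my : Vec K} {S : Matrix (Fin d ⊕ Fin K) (Fin d ⊕ Fin K) ℝ}

lemma jointGaussDensity_eq_const_mul_gaussKernel (mu : Vec d) (my : Vec K)
    (S : Matrix (Fin d ⊕ Fin K) (Fin d ⊕ Fin K) ℝ) :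
    jointGaussDensity mu my S = fun p => (Real.sqrt ((2 * Real.pi) ^ (d + K) * S.det))⁻¹ *
      gaussKernel (Sum.elim mu my) S⁻¹ (Sum.elim p.1 p.2) := by
  ext p
  rw [jointGaussDensity, gaussKernel, Sum.elim_sub_sub]

lemma condM_jointGaussDensity (hS : S.PosDef) (mu : Vec d) (my y : Vec K) :
    condM (jointGaussDensity mu my S) y =
      condM (fun p => gaussKernel (Sum.elim mu my) S⁻¹ (Sum.elim p.1 p.2)) y := by
  have hdet := hS.det_pos
  rw [jointGaussDensity_eq_const_mul_gaussKernel, condM_const_mul (by positivity)]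

lemma measurePreserving_sumElim :
    MeasurePreserving fun p : Vec d × Vec K => (Sum.elim p.1 p.2 : Fin d ⊕ Fin K → ℝ) := by
  have hcoe : (fun p : Vec d × Vec K => (Sum.elim p.1 p.2 : Fin d ⊕ Fin K → ℝ)) =
      (MeasurableEquiv.sumPiEquivProdPi fun _ : Fin d ⊕ Fin K => ℝ).symm := by
    ext p i
    cases i <;> rfl
  rw [hcoe]
  exact volume_measurePreserving_sumPiEquivProdPi_symm fun _ : Fin d ⊕ Fin K => ℝ

lemma measurable_toLp_sumElim :
    Measurable fun p : Vec d × Vec K => WithLp.toLp 2 (Sum.elim p.1 p.2 : Fin d ⊕ Fin K → ℝ) :=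
  (WithLp.measurable_toLp 2 _).comp measurePreserving_sumElim.measurable

lemma measurePreserving_toLp_sumElim_jointGauss (hS : S.PosDef) (mu : Vec d) (my : Vec K) :
    MeasurePreserving (fun p : Vec d × Vec K => WithLp.toLp 2 (Sum.elim p.1 p.2))
      (jointGauss mu my S) (multivariateGaussian (WithLp.toLp 2 (Sum.elim mu my)) S) := by
  refine ⟨measurable_toLp_sumElim, ?_⟩
  have hdens := map_withDensity_comp (μ := volume)
    (measurePreserving_sumElim (d := d) (K := K)).measurable
    ((continuous_gaussKernel (Sum.elim mu my) S⁻¹).const_mul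
      (Real.sqrt ((2 * Real.pi) ^ (d + K) * S.det))⁻¹).measurable.ennreal_ofReal
  have hof := map_ofLp_multivariateGaussian hS (Sum.elim mu my)
  rw [Fintype.card_sum, Fintype.card_fin, Fintype.card_fin] at hof
  rw [measurePreserving_sumElim.map_eq, ← hof] at hdens
  have hto := congrArg (Measure.map (WithLp.toLp 2)) hdens
  rw [Measure.map_map (by fun_prop) measurePreserving_sumElim.measurable,
    Measure.map_map (by fun_prop) (by fun_prop)] at hto
  simpa only [jointGauss, jointGaussDensity_eq_const_mul_gaussKernel, Function.comp_def,
    WithLp.toLp_ofLp, Measure.map_id'] using hto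

lemma isProbabilityMeasure_jointGauss (hS : S.PosDef) (mu : Vec d) (my : Vec K) :
    IsProbabilityMeasure (jointGauss mu my S) := by
  rw [← Measure.isProbabilityMeasure_map_iff measurable_toLp_sumElim.aemeasurable,
    (measurePreserving_toLp_sumElim_jointGauss hS mu my).map_eq]
  infer_instance

lemma memLp_sumElim_jointGauss (hS : S.PosDef) (mu : Vec d) (my : Vec K) (i : Fin d ⊕ Fin K) :
    MemLp (fun p => Sum.elim p.1 p.2 i) 2 (jointGauss mu my S) :=
  ((EuclideanSpace.proj i : EuclideanSpace ℝ (Fin d ⊕ Fin K) →L[ℝ] ℝ).comp_memLp'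
    (IsGaussian.memLp_two_id)).comp_measurePreserving
    (measurePreserving_toLp_sumElim_jointGauss hS mu my)

lemma integral_sumElim_jointGauss (hS : S.PosDef) (mu : Vec d) (my : Vec K) (i : Fin d ⊕ Fin K) :
    ∫ p, Sum.elim p.1 p.2 i ∂jointGauss mu my S = Sum.elim mu my i := by
  have hmap := (measurePreserving_toLp_sumElim_jointGauss hS mu my).map_eq
  have h := integral_map (μ := jointGauss mu my S) measurable_toLp_sumElim.aemeasurable
    (f := fun x => x i) (Continuous.aestronglyMeasurable (by fun_prop))
  rw [← h, hmap]
  have := (EuclideanSpace.proj i : EuclideanSpace ℝ (Fin d ⊕ Fin K) →L[ℝ] ℝ).integral_comp_comm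
    (IsGaussian.integrable_id (μ := multivariateGaussian (WithLp.toLp 2 (Sum.elim mu my)) S))
  simpa using this

lemma covariance_sumElim_jointGauss (hS : S.PosDef) (mu : Vec d) (my : Vec K)
    (i j : Fin d ⊕ Fin K) :
    covariance (fun p => Sum.elim p.1 p.2 i) (fun p => Sum.elim p.1 p.2 j) (jointGauss mu my S) =
      S i j := by
  rw [← covariance_eval_multivariateGaussian (μ := WithLp.toLp 2 (Sum.elim mu my)) hS.posSemidef,
    ← (measurePreserving_toLp_sumElim_jointGauss hS mu my).map_eq,
    covariance_map_fun (by fun_prop) (by fun_prop) measurable_toLp_sumElim.aemeasurable]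

lemma gw2_eq_one_add_dotProduct_self (p : Vec d × Vec K) :
    gw2 p = 1 + (Sum.elim p.1 p.2 : Fin d ⊕ Fin K → ℝ) ⬝ᵥ Sum.elim p.1 p.2 := by
  simp only [gw2, dotProduct, sq, add_assoc, Fintype.sum_sum_type, Sum.elim_inl, Sum.elim_inr]

lemma integrable_gw2_jointGauss (hS : S.PosDef) (mu : Vec d) (my : Vec K) :
    Integrable gw2 (jointGauss mu my S) := by
  have := isProbabilityMeasure_jointGauss hS mu my
  simp only [funext gw2_eq_one_add_dotProduct_self, dotProduct, ← sq]
  exact (integrable_const 1).add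
    (integrable_finsetSum _ fun i _ => (memLp_sumElim_jointGauss hS mu my i).integrable_sq)

end JointGaussian

section WeightedTotalVariation

open ProbabilityTheory

variable {E : Type*} [MeasurableSpace E] {G X Y : E → ℝ} {μ ν : Measure E}

lemma dG_nonneg : 0 ≤ dG G μ ν := Real.iSup_nonneg fun _ => abs_nonneg _

lemma abs_integral_sub_le_dG (hμ : Integrable G μ) (hν : Integrable G ν) (hX : Measurable X)
    (hXG : ∀ v, |X v| ≤ G v) : |(∫ v, X v ∂μ) - ∫ v, X v ∂ν| ≤ dG G μ ν := by
  refine le_ciSup (f := fun f : {f : E → ℝ // Measurable f ∧ ∀ v, |f v| ≤ G v} =>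
    |(∫ v, f.1 v ∂μ) - ∫ v, f.1 v ∂ν|) ⟨(∫ v, G v ∂μ) + ∫ v, G v ∂ν, ?_⟩ ⟨X, hX, hXG⟩
  rintro _ ⟨⟨f, -, hf⟩, rfl⟩
  exact (abs_sub _ _).trans (add_le_add
    (norm_integral_le_of_norm_le (f := f) hμ (ae_of_all _ hf))
    (norm_integral_le_of_norm_le (f := f) hν (ae_of_all _ hf)))

lemma abs_covariance_sub_le_mul_dG [IsProbabilityMeasure μ] [IsProbabilityMeasure ν]
    (hμ : Integrable G μ) (hν : Integrable G ν) (hX : Measurable X) (hY : Measurable Y)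
    (hXG : ∀ v, |X v| ≤ G v) (hYG : ∀ v, |Y v| ≤ G v) (hXYG : ∀ v, |X v * Y v| ≤ G v)
    (hXμ : MemLp X 2 μ) (hYμ : MemLp Y 2 μ) (hXν : MemLp X 2 ν) (hYν : MemLp Y 2 ν) :
    |covariance X Y μ - covariance X Y ν| ≤
      (1 + |∫ v, X v ∂μ| + |∫ v, Y v ∂ν|) * dG G μ ν := by
  have hsplit : covariance X Y μ - covariance X Y ν =
      ((∫ v, X v * Y v ∂μ) - ∫ v, X v * Y v ∂ν) -
        (∫ v, X v ∂μ) * ((∫ v, Y v ∂μ) - ∫ v, Y v ∂ν) -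
        (∫ v, Y v ∂ν) * ((∫ v, X v ∂μ) - ∫ v, X v ∂ν) := by
    rw [covariance_eq_sub hXμ hYμ, covariance_eq_sub hXν hYν]
    simp only [Pi.mul_apply]
    ring
  calc |covariance X Y μ - covariance X Y ν|
      ≤ |(∫ v, X v * Y v ∂μ) - ∫ v, X v * Y v ∂ν| +
        |∫ v, X v ∂μ| * |(∫ v, Y v ∂μ) - ∫ v, Y v ∂ν| +
        |∫ v, Y v ∂ν| * |(∫ v, X v ∂μ) - ∫ v, X v ∂ν| := by
        rw [hsplit, ← abs_mul, ← abs_mul]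
        exact (abs_sub _ _).trans (add_le_add_left (abs_sub _ _) _)
    _ ≤ dG G μ ν + |∫ v, X v ∂μ| * dG G μ ν + |∫ v, Y v ∂ν| * dG G μ ν := by
        gcongr
        · exact abs_integral_sub_le_dG hμ hν (hX.mul hY) hXYG
        · exact abs_integral_sub_le_dG hμ hν hY hYG
        · exact abs_integral_sub_le_dG hμ hν hX hXG
    _ = _ := by ring

end WeightedTotalVariation

section ParameterIdentification

open scoped Matrix.Norms.Operator

lemma abs_mul_sumElim_le_gw2 (p : Vec d × Vec K) (i j : Fin d ⊕ Fin K) :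
    |Sum.elim p.1 p.2 i * Sum.elim p.1 p.2 j| ≤ gw2 p := by
  set x : Fin d ⊕ Fin K → ℝ := Sum.elim p.1 p.2 with hx
  rw [gw2_eq_one_add_dotProduct_self, ← hx, abs_mul, ← Real.norm_eq_abs, ← Real.norm_eq_abs]
  have hij := mul_le_mul (norm_le_pi_norm x i) (norm_le_pi_norm x j) (norm_nonneg _) (norm_nonneg _)
  linarith [norm_sq_le_dotProduct_self x]

lemma abs_sumElim_le_gw2 (p : Vec d × Vec K) (i : Fin d ⊕ Fin K) :
    |Sum.elim p.1 p.2 i| ≤ gw2 p := by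
  set x : Fin d ⊕ Fin K → ℝ := Sum.elim p.1 p.2 with hx
  rw [gw2_eq_one_add_dotProduct_self, ← hx, ← Real.norm_eq_abs]
  nlinarith [norm_le_pi_norm x i, norm_sq_le_dotProduct_self x, sq_nonneg (‖x‖ - 1)]

lemma measurable_sumElim_apply (i : Fin d ⊕ Fin K) :
    Measurable fun p : Vec d × Vec K => Sum.elim p.1 p.2 i :=
  (measurable_pi_apply i).comp measurePreserving_sumElim.measurable

variable {S S' : Matrix (Fin d ⊕ Fin K) (Fin d ⊕ Fin K) ℝ}

lemma norm_mean_sub_le_dG_jointGauss (hS : S.PosDef) (hS' : S'.PosDef) (mu mu' : Vec d)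
    (my my' : Vec K) :
    ‖Sum.elim mu my - Sum.elim mu' my'‖ ≤
      dG gw2 (jointGauss mu my S) (jointGauss mu' my' S') := by
  refine (pi_norm_le_iff_of_nonneg dG_nonneg).2 fun i => ?_
  rw [Pi.sub_apply, ← integral_sumElim_jointGauss hS, ← integral_sumElim_jointGauss hS']
  exact abs_integral_sub_le_dG (integrable_gw2_jointGauss hS mu my)
    (integrable_gw2_jointGauss hS' mu' my') (measurable_sumElim_apply i)
    fun p => abs_sumElim_le_gw2 p i

lemma abs_covariance_apply_sub_le_mul_dG_jointGauss (hS : S.PosDef) (hS' : S'.PosDef)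
    (mu mu' : Vec d) (my my' : Vec K) (i j : Fin d ⊕ Fin K) :
    |S i j - S' i j| ≤ (1 + |Sum.elim mu my i| + |Sum.elim mu' my' j|) *
      dG gw2 (jointGauss mu my S) (jointGauss mu' my' S') := by
  have := isProbabilityMeasure_jointGauss hS mu my
  have := isProbabilityMeasure_jointGauss hS' mu' my'
  rw [← covariance_sumElim_jointGauss hS mu my, ← covariance_sumElim_jointGauss hS' mu' my',
    ← integral_sumElim_jointGauss hS, ← integral_sumElim_jointGauss hS']
  exact abs_covariance_sub_le_mul_dG (integrable_gw2_jointGauss hS mu my)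
    (integrable_gw2_jointGauss hS' mu' my') (measurable_sumElim_apply i)
    (measurable_sumElim_apply j) (fun p => abs_sumElim_le_gw2 p i)
    (fun p => abs_sumElim_le_gw2 p j) (fun p => abs_mul_sumElim_le_gw2 p i j)
    (memLp_sumElim_jointGauss hS mu my i) (memLp_sumElim_jointGauss hS mu my j)
    (memLp_sumElim_jointGauss hS' mu' my' i) (memLp_sumElim_jointGauss hS' mu' my' j)

lemma norm_covariance_sub_le_mul_dG_jointGauss {R : ℝ} {mu mu' : Vec d} {my my' : Vec K}
    (hR : 0 < R) (h : BoundedParams R (Sum.elim mu my) S)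
    (h' : BoundedParams R (Sum.elim mu' my') S') :
    ‖S - S'‖ ≤ Fintype.card (Fin d ⊕ Fin K) * ((1 + 2 * R) *
      dG gw2 (jointGauss mu my S) (jointGauss mu' my' S')) := by
  have hD := dG_nonneg (G := gw2) (μ := jointGauss mu my S) (ν := jointGauss mu' my' S')
  refine norm_le_card_mul_of_abs_apply_le (by positivity) fun i j => ?_
  refine (abs_covariance_apply_sub_le_mul_dG_jointGauss (h.posDef hR) (h'.posDef hR)
    mu mu' my my' i j).trans ?_
  refine mul_le_mul_of_nonneg_right ?_ hD
  have hi : |Sum.elim mu my i| ≤ R := (norm_le_pi_norm _ i).trans h.norm_mean_le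
  have hj : |Sum.elim mu' my' j| ≤ R := (norm_le_pi_norm _ j).trans h'.norm_mean_le
  linarith

variable (d K) in
lemma exists_norm_mean_sub_add_norm_inv_sub_le {R : ℝ} (hR : 0 < R) :
    ∃ M : ℝ, 0 < M ∧ ∀ (mu mu' : Vec d) (my my' : Vec K)
      (S S' : Matrix (Fin d ⊕ Fin K) (Fin d ⊕ Fin K) ℝ),
      BoundedParams R (Sum.elim mu my) S → BoundedParams R (Sum.elim mu' my') S' →
      ‖Sum.elim mu my - Sum.elim mu' my'‖ + ‖S⁻¹ - S'⁻¹‖ ≤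
        M * dG gw2 (jointGauss mu my S) (jointGauss mu' my' S') := by
  set n : ℝ := (Fintype.card (Fin d ⊕ Fin K) : ℝ)
  refine ⟨1 + (n * R ^ 2) * (n * (1 + 2 * R)) * (n * R ^ 2), by positivity,
    fun mu mu' my my' S S' h h' => ?_⟩
  set D := dG gw2 (jointGauss mu my S) (jointGauss mu' my' S')
  have hD : 0 ≤ D := dG_nonneg
  have hinv : ‖S⁻¹ - S'⁻¹‖ ≤ (n * R ^ 2) * (n * ((1 + 2 * R) * D)) * (n * R ^ 2) := by
    refine (norm_inv_sub_inv_le (h.posDef hR).isUnit (h'.posDef hR).isUnit).trans ?_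
    gcongr
    · exact (h.inv hR).norm_matrix_le hR
    · exact norm_covariance_sub_le_mul_dG_jointGauss hR h h'
    · exact (h'.inv hR).norm_matrix_le hR
  calc _ ≤ D + (n * R ^ 2) * (n * ((1 + 2 * R) * D)) * (n * R ^ 2) :=
        add_le_add (norm_mean_sub_le_dG_jointGauss (h.posDef hR) (h'.posDef hR) _ _ _ _) hinv
    _ = _ := by ring

end ParameterIdentification

/-- **Local Lipschitz continuity of Gaussian conditioning** (Lemma A.12):
for Gaussians `π, p ∈ 𝒢_R(ℝ^d × ℝ^K)` and `|y†| ≤ κ_y`, `d_g(Bπ, Bp) ≤ C_B d_g(π, p)`. -/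
theorem B_locally_lipschitz_gaussians
    (d K : ℕ) (R κy : ℝ) (hR : 1 ≤ R) :
    ∃ C : ℝ, 0 < C ∧
      ∀ ydag : Vec K, enorm ydag ≤ κy →
      ∀ (mu : Vec d) (my : Vec K) (S : Matrix (Fin d ⊕ Fin K) (Fin d ⊕ Fin K) ℝ)
        (mu' : Vec d) (my' : Vec K) (S' : Matrix (Fin d ⊕ Fin K) (Fin d ⊕ Fin K) ℝ),
        S.PosDef → S'.PosDef →
        enorm (Sum.elim mu my) ≤ R → enorm (Sum.elim mu' my') ≤ R →
        loe ((R ^ 2)⁻¹ • 1) S → loe S (R ^ 2 • 1) →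
        loe ((R ^ 2)⁻¹ • 1) S' → loe S' (R ^ 2 • 1) →
        dG gw (condM (jointGaussDensity mu my S) ydag)
            (condM (jointGaussDensity mu' my' S') ydag) ≤
          C * dG gw2 (jointGauss mu my S) (jointGauss mu' my' S') := by
  have hR0 : 0 < R := by linarith
  obtain ⟨C, hC, hcond⟩ := exists_dG_condM_gaussKernel_le d K hR0 κy
  obtain ⟨M, hM, hparam⟩ := exists_norm_mean_sub_add_norm_inv_sub_le d K hR0
  refine ⟨C * M, mul_pos hC hM, fun y hy mu my S mu' my' S' hS hS' hm hm' hl hu hl' hu' => ?_⟩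
  have h : BoundedParams R (Sum.elim mu my) S := ⟨hm, hl, hu⟩
  have h' : BoundedParams R (Sum.elim mu' my') S' := ⟨hm', hl', hu'⟩
  rw [condM_jointGaussDensity hS, condM_jointGaussDensity hS', mul_assoc]
  exact (hcond y hy _ _ _ _ (h.inv hR0) (h'.inv hR0)).trans
    (mul_le_mul_of_nonneg_left (hparam mu mu' my my' S S' h h') hC.le)

end EnKF
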